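/- Suppose f and |f| are both Henstock–Kurzweil integrable on [a,b]. Then f is Lebesgue integrable on [a,b] and the HK integral of f equals its Lebesgue integral. -/

import Mathlib

def IsTaggedPartition (a b : ℝ) (n : ℕ) (t x : ℕ → ℝ) : Prop :=
  t 0 = a ∧ t n = b ∧ (∀ j < n, t j < t (j + 1)) ∧
    ∀ j < n, x j ∈ Set.Icc (t j) (t (j + 1))

def IsFine (δ : ℝ → ℝ) (n : ℕ) (t x : ℕ → ℝ) : Prop :=
  ∀ j < n, t (j + 1) - t j < δ (x j)

def RiemannSum (g : ℝ → ℝ) (n : ℕ) (t x : ℕ → ℝ) : ℝ :=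
  ∑ j ∈ Finset.range n, g (x j) * (t (j + 1) - t j)

/-- `f` is Henstock–Kurzweil integrable on `[a,b]` with integral `α`. -/
def HKIntegral (a b : ℝ) (f : ℝ → ℝ) (α : ℝ) : Prop :=
  ∀ ε > 0, ∃ δ : ℝ → ℝ, (∀ y ∈ Set.Icc a b, 0 < δ y) ∧
    ∀ (n : ℕ) (t x : ℕ → ℝ), IsTaggedPartition a b n t x → IsFine δ n t x →
      |RiemannSum f n t x - α| < ε

open MeasureTheory Filter Topology

/-- Achievable Riemann sums `s` over `δ`-fine tagged partitions of `[u, v]`. -/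
inductive FS (g δ : ℝ → ℝ) (u : ℝ) : ℝ → ℝ → Prop
  | refl : FS g δ u u 0
  | snoc (v w s y : ℝ) : FS g δ u v s → v < w → y ∈ Set.Icc v w → w - v < δ y →
      FS g δ u w (s + g y * (w - v))

lemma FS.le {g δ : ℝ → ℝ} {u v s : ℝ} (h : FS g δ u v s) : u ≤ v := by
  induction h with
  | refl => exact le_rfl
  | snoc v w s y _ hvw _ _ ih => linarith

lemma FS.trans {g δ : ℝ → ℝ} {u v w s s' : ℝ} (h : FS g δ u v s) (h' : FS g δ v w s') :
    FS g δ u w (s + s') := by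
  induction h' with
  | refl => simpa using h
  | snoc v' w' s' y _ hvw hy hd ih =>
    rw [← add_assoc]
    exact FS.snoc _ _ _ _ ih hvw hy hd

lemma FS.single {g δ : ℝ → ℝ} {v w : ℝ} (y : ℝ) (hvw : v < w) (hy : y ∈ Set.Icc v w)
    (hd : w - v < δ y) : FS g δ v w (g y * (w - v)) := by
  simpa using FS.snoc v w 0 y FS.refl hvw hy hd

lemma FS.mono {g δ δ' : ℝ → ℝ} {u v s : ℝ} (hδ : ∀ y, δ y ≤ δ' y) (h : FS g δ u v s) :
    FS g δ' u v s := by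
  induction h with
  | refl => exact FS.refl
  | snoc v w s y _ hvw hy hd ih => exact FS.snoc _ _ _ _ ih hvw hy (hd.trans_le (hδ y))

lemma FS.nonneg {g δ : ℝ → ℝ} (hg : ∀ x, 0 ≤ g x) {u v s : ℝ} (h : FS g δ u v s) : 0 ≤ s := by
  induction h with
  | refl => exact le_rfl
  | snoc v w s y _ hvw hy hd ih =>
    have := mul_nonneg (hg y) (sub_nonneg.2 hvw.le)
    linarith

lemma FS.partition {g δ : ℝ → ℝ} {u v s : ℝ} (h : FS g δ u v s) :
    ∃ n t x, IsTaggedPartition u v n t x ∧ IsFine δ n t x ∧ RiemannSum g n t x = s := by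
  induction h with
  | refl =>
    exact ⟨0, fun _ => u, fun _ => u, ⟨rfl, rfl, by simp, by simp⟩, by simp [IsFine],
      by simp [RiemannSum]⟩
  | snoc v w s y _ hvw hy hd ih =>
    obtain ⟨n, t, x, ⟨h0, hn, hlt, hx⟩, hf, hs⟩ := ih
    have e1 : ∀ j < n, (fun j => if j ≤ n then t j else w) j = t j := by
      intro j hj; simp [hj.le]
    have e2 : ∀ j < n, (fun j => if j ≤ n then t j else w) (j+1) = t (j+1) := by
      intro j hj; simp [Nat.succ_le_of_lt hj]
    have e3 : ∀ j < n, (fun j => if j < n then x j else y) j = x j := by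
      intro j hj; simp [hj]
    refine ⟨n + 1, fun j => if j ≤ n then t j else w, fun j => if j < n then x j else y,
      ⟨by simpa using h0, by simp, ?_, ?_⟩, ?_, ?_⟩
    · intro j hj
      rcases Nat.lt_succ_iff_lt_or_eq.1 hj with hj | rfl
      · rw [e1 j hj, e2 j hj]; exact hlt j hj
      · simpa [hn] using hvw
    · intro j hj
      rcases Nat.lt_succ_iff_lt_or_eq.1 hj with hj | rfl
      · rw [e1 j hj, e2 j hj, e3 j hj]; exact hx j hj
      · simpa [hn] using hy
    · intro j hj
      rcases Nat.lt_succ_iff_lt_or_eq.1 hj with hj | rfl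
      · rw [e1 j hj, e2 j hj, e3 j hj]; exact hf j hj
      · simpa [hn] using hd
    · unfold RiemannSum
      rw [Finset.sum_range_succ]
      congr 1
      · rw [← hs]
        unfold RiemannSum
        refine Finset.sum_congr rfl fun j hj => ?_
        have hj := Finset.mem_range.1 hj
        rw [e1 j hj, e2 j hj, e3 j hj]
      · simp [hn]

lemma cousin (g δ : ℝ → ℝ) {u v : ℝ} (huv : u ≤ v) (hδ : ∀ y ∈ Set.Icc u v, 0 < δ y) :
    ∃ s, FS g δ u v s := by
  set S : Set ℝ := {x | x ≤ v ∧ ∃ s, FS g δ u x s} with hS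
  have huS : u ∈ S := ⟨huv, 0, FS.refl⟩
  have hb : BddAbove S := ⟨v, fun x hx => hx.1⟩
  set c := sSup S with hc
  have huc : u ≤ c := le_csSup hb huS
  have hcv : c ≤ v := csSup_le ⟨u, huS⟩ fun x hx => hx.1
  have hdc := hδ c ⟨huc, hcv⟩
  obtain ⟨x, ⟨hxv, s, hs⟩, hxc⟩ := exists_lt_of_lt_csSup ⟨u, huS⟩ (sub_lt_self c hdc)
  have hxc' : x ≤ c := le_csSup hb ⟨hxv, s, hs⟩
  have hcS : ∃ s, FS g δ u c s := by
    rcases hxc'.eq_or_lt with h | h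
    · exact ⟨s, h ▸ hs⟩
    · exact ⟨_, FS.snoc x c s c hs h ⟨hxc', le_rfl⟩ (by linarith)⟩
  rcases hcv.eq_or_lt with h | h
  · rw [← h]; exact hcS
  · exfalso
    obtain ⟨s, hs⟩ := hcS
    have h1 : c < min v (c + δ c / 2) := lt_min h (by linarith)
    have h2 : min v (c + δ c / 2) ∈ S := by
      refine ⟨min_le_left _ _, _, FS.snoc c _ s c hs h1 ⟨le_rfl, h1.le⟩ ?_⟩
      have := min_le_right v (c + δ c / 2)
      linarith
    exact absurd (le_csSup hb h2) (not_le.2 h1)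

lemma HK.gauge {a b : ℝ} {f : ℝ → ℝ} {α : ℝ} (hf : HKIntegral a b f α) {ε : ℝ} (hε : 0 < ε) :
    ∃ δ : ℝ → ℝ, (∀ y ∈ Set.Icc a b, 0 < δ y) ∧ ∀ s, FS f δ a b s → |s - α| < ε := by
  obtain ⟨δ, hδ, h⟩ := hf ε hε
  refine ⟨δ, hδ, fun s hs => ?_⟩
  obtain ⟨n, t, x, h1, h2, rfl⟩ := hs.partition
  exact h n t x h1 h2

lemma HK.add {a b : ℝ} {f g : ℝ → ℝ} {α β : ℝ} (hf : HKIntegral a b f α)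
    (hg : HKIntegral a b g β) : HKIntegral a b (fun x => f x + g x) (α + β) := by
  intro ε hε
  obtain ⟨δ, hδ, h⟩ := hf (ε/2) (half_pos hε)
  obtain ⟨δ', hδ', h'⟩ := hg (ε/2) (half_pos hε)
  refine ⟨fun y => min (δ y) (δ' y), fun y hy => lt_min (hδ y hy) (hδ' y hy), ?_⟩
  intro n t x hp hfine
  have h1 := h n t x hp (fun j hj => (hfine j hj).trans_le (min_le_left _ _))
  have h2 := h' n t x hp (fun j hj => (hfine j hj).trans_le (min_le_right _ _))
  have e : RiemannSum (fun x => f x + g x) n t x = RiemannSum f n t x + RiemannSum g n t x := by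
    unfold RiemannSum
    rw [← Finset.sum_add_distrib]
    exact Finset.sum_congr rfl fun j _ => by ring
  rw [e]
  rw [abs_lt] at *
  constructor <;> linarith

lemma HK.neg {a b : ℝ} {f : ℝ → ℝ} {α : ℝ} (hf : HKIntegral a b f α) :
    HKIntegral a b (fun x => - f x) (-α) := by
  intro ε hε
  obtain ⟨δ, hδ, h⟩ := hf ε hε
  refine ⟨δ, hδ, fun n t x hp hfine => ?_⟩
  have h1 := h n t x hp hfine
  have e : RiemannSum (fun x => - f x) n t x = - RiemannSum f n t x := by
    unfold RiemannSum
    rw [← Finset.sum_neg_distrib]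
    exact Finset.sum_congr rfl fun j _ => by ring
  rw [e, ← abs_neg]
  convert h1 using 2
  ring

/-- Upper bound through the Vitali–Carathéodory theorem. -/
lemma HK.le_integral {a b : ℝ} (hab : a ≤ b) {f : ℝ → ℝ} {α : ℝ} (hf : HKIntegral a b f α)
    (hi : IntegrableOn f (Set.Icc a b) volume) : α ≤ ∫ x in Set.Icc a b, f x := by
  refine le_of_forall_pos_le_add fun ε hε => ?_
  have : Measure.WeaklyRegular (volume.restrict (Set.Icc a b)) :=
    Measure.WeaklyRegular.restrict_of_measure_ne_top (by simp)
  obtain ⟨G, hfG, hlsc, hGi, hGt, hGlt⟩ :=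
    exists_lt_lowerSemicontinuous_integral_lt (μ := volume.restrict (Set.Icc a b)) f hi
      (half_pos hε)
  obtain ⟨δ, hδ, hs⟩ := HK.gauge hf (half_pos hε)
  have hr : ∀ y, ∃ r > 0, ∀ z, |z - y| < r → (f y : EReal) < G z := by
    intro y
    obtain ⟨r, hr, h⟩ := Metric.eventually_nhds_iff.1 (hlsc y _ (hfG y))
    exact ⟨r, hr, fun z hz => h (by rwa [Real.dist_eq])⟩
  choose r hr0 hr using hr
  obtain ⟨s, hsF⟩ := cousin f (fun y => min (δ y) (r y)) hab
    (fun y hy => lt_min (hδ y hy) (hr0 y))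
  have h1 := hs s (hsF.mono fun y => min_le_left _ _)
  have hII : ∀ u v, a ≤ u → u ≤ v → v ≤ b →
      IntervalIntegrable (fun x => (G x).toReal) volume u v := by
    intro u v hu huv hv
    rw [intervalIntegrable_iff_integrableOn_Icc_of_le huv]
    exact IntegrableOn.mono_set hGi (Set.Icc_subset_Icc hu hv)
  have key : ∀ v s, FS f r a v s → v ≤ b → s ≤ ∫ x in a..v, (G x).toReal := by
    intro v s h
    induction h with
    | refl => simp
    | snoc v w s y hF hvw hy hd ih =>
      intro hw
      have hav := hF.le
      have h2 := ih (by linarith)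
      rw [← intervalIntegral.integral_add_adjacent_intervals (hII a v le_rfl hav (by linarith))
        (hII v w hav hvw.le hw)]
      have h3 : ∫ x in v..w, f y ≤ ∫ x in v..w, (G x).toReal := by
        refine intervalIntegral.integral_mono_ae_restrict hvw.le (by simp)
          (hII v w hav hvw.le hw) ?_
        have h4 : ∀ᵐ x ∂(volume.restrict (Set.Icc v w)), G x < ⊤ :=
          ae_restrict_of_ae_restrict_of_subset (Set.Icc_subset_Icc hav hw) hGt
        filter_upwards [h4, ae_restrict_mem measurableSet_Icc] with z hz hzm
        have h5 := hr y z (by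
          rw [abs_lt]
          constructor <;> linarith [hy.1, hy.2, hzm.1, hzm.2])
        have h6 := EReal.toReal_le_toReal h5.le (EReal.coe_ne_bot _) hz.ne
        simpa using h6
      simp only [intervalIntegral.integral_const, smul_eq_mul] at h3
      linarith [mul_comm (f y) (w - v)]
  have h7 := key b s (hsF.mono fun y => min_le_right _ _) le_rfl
  rw [intervalIntegral.integral_of_le hab, ← integral_Icc_eq_integral_Ioc] at h7
  have := (abs_lt.1 h1).1
  linarith

lemma straddle {G : ℝ → ℝ} {x : ℝ} (h : DifferentiableAt ℝ G x) {η : ℝ} (hη : 0 < η) :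
    ∃ r > 0, ∀ u v, u ≤ x → x ≤ v → v - u < r →
      |G v - G u - deriv G x * (v - u)| ≤ η * (v - u) := by
  have h1 := (hasDerivAt_iff_isLittleO.1 h.hasDerivAt).def hη
  obtain ⟨r, hr, h2⟩ := Metric.eventually_nhds_iff.1 h1
  refine ⟨r, hr, fun u v hu hv huv => ?_⟩
  have hu' := h2 (y := u) (by rw [Real.dist_eq, abs_lt]; constructor <;> linarith)
  have hv' := h2 (y := v) (by rw [Real.dist_eq, abs_lt]; constructor <;> linarith)
  simp only [Real.norm_eq_abs, smul_eq_mul] at hu' hv'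
  rw [abs_of_nonpos (sub_nonpos.2 hu)] at hu'
  rw [abs_of_nonneg (sub_nonneg.2 hv)] at hv'
  rw [abs_le] at *
  constructor <;> linarith [hu'.1, hu'.2, hv'.1, hv'.2]

lemma grid {a b : ℝ} (hab : a < b) {g δ G : ℝ → ℝ}
    (hδ : ∀ y ∈ Set.Icc a b, 0 < δ y)
    (hG : ∀ u v s, a ≤ u → v ≤ b → FS g δ u v s → G u + s ≤ G v) {γ : ℝ}
    (hγ : ∀ s, FS g δ a b s → G b - s ≤ γ)
    {η r : ℝ} (hη : 0 < η) (hr : 0 < r) (E : Set ℝ) (hE : E ⊆ Set.Ioc a b)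
    (h : ∀ x ∈ E, ∀ u v, u ≤ x → x ≤ v → v - u < r →
      v - u < δ x ∧ g x * (v - u) + η * (v - u) ≤ G v - G u) (hGa : G a = 0) :
    volume E ≤ ENNReal.ofReal (γ / η) := by
  obtain ⟨N, hN⟩ := exists_nat_gt ((b - a) / r)
  have hN0 : (0:ℝ) < N := lt_trans (div_pos (sub_pos.2 hab) hr) hN
  set d := (b - a) / N with hd
  have hd0 : 0 < d := div_pos (sub_pos.2 hab) hN0
  have hdr : d < r := by
    rw [hd, div_lt_iff₀ hN0]; rw [div_lt_iff₀ hr] at hN; linarith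
  have hNd : a + N * d = b := by rw [hd]; field_simp; ring
  have key : ∀ k : ℕ, k ≤ N → ∃ s, FS g δ a (a + k * d) s ∧
      volume (E ∩ Set.Ioc a (a + k * d)) ≤ ENNReal.ofReal ((G (a + k * d) - s) / η) := by
    intro k
    induction k with
    | zero => intro _; exact ⟨0, by simpa using FS.refl, by simp⟩
    | succ k ih =>
      intro hk
      obtain ⟨s, hs, hv⟩ := ih (by omega)
      have hk' : ((k + 1 : ℕ) : ℝ) ≤ N := by exact_mod_cast hk
      set u := a + k * d with hu
      have hw : a + ((k + 1 : ℕ) : ℝ) * d = u + d := by rw [hu]; push_cast; ring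
      have hwb : u + d ≤ b := by
        rw [← hw, ← hNd]; gcongr
      rw [hw]
      have hau := hs.le
      have hpos : 0 ≤ G u - s := by
        have := hG a u s le_rfl (by linarith) hs
        linarith
      by_cases hne : (E ∩ Set.Ioc u (u + d)).Nonempty
      · obtain ⟨x, hxE, hx⟩ := hne
        obtain ⟨h1, h2⟩ := h x hxE u (u + d) hx.1.le hx.2 (by linarith)
        refine ⟨_, hs.trans (FS.single x (by linarith) ⟨hx.1.le, hx.2⟩ h1), ?_⟩
        have hsub : E ∩ Set.Ioc a (u + d) ⊆ (E ∩ Set.Ioc a u) ∪ Set.Ioc u (u + d) := by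
          intro z hz
          rcases le_or_gt z u with hzu | hzu
          · exact Or.inl ⟨hz.1, hz.2.1, hzu⟩
          · exact Or.inr ⟨hzu, hz.2.2⟩
        calc volume (E ∩ Set.Ioc a (u + d)) ≤ _ := measure_mono hsub
          _ ≤ _ := measure_union_le _ _
          _ ≤ ENNReal.ofReal ((G u - s) / η) + ENNReal.ofReal d := by
            gcongr
            simp
          _ = ENNReal.ofReal ((G u - s) / η + d) :=
            (ENNReal.ofReal_add (div_nonneg hpos hη.le) hd0.le).symm
          _ ≤ _ := by
            apply ENNReal.ofReal_le_ofReal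
            rw [div_add' _ _ _ hη.ne']
            gcongr
            simp only [add_sub_cancel_left] at h2 ⊢
            linarith
      · obtain ⟨s', hs'⟩ := cousin g δ (u := u) (v := u + d) (by linarith)
          (fun y hy => hδ y ⟨by linarith [hy.1], by linarith [hy.2]⟩)
        refine ⟨_, hs.trans hs', ?_⟩
        have hsub : E ∩ Set.Ioc a (u + d) ⊆ E ∩ Set.Ioc a u := by
          intro z hz
          rcases le_or_gt z u with hzu | hzu
          · exact ⟨hz.1, hz.2.1, hzu⟩
          · exact absurd ⟨z, hz.1, hzu, hz.2.2⟩ hne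
        refine (measure_mono hsub).trans (hv.trans ?_)
        apply ENNReal.ofReal_le_ofReal
        have := hG u (u + d) s' hau hwb hs'
        exact div_le_div_of_nonneg_right (by linarith) hη.le
  obtain ⟨s, hs, hv⟩ := key N le_rfl
  rw [hNd] at hs hv
  rw [Set.inter_eq_left.2 hE] at hv
  refine hv.trans (ENNReal.ofReal_le_ofReal ?_)
  gcongr
  exact hγ s hs

lemma approx {a b : ℝ} (hab : a < b) {g : ℝ → ℝ} (hg : ∀ x, 0 ≤ g x) {β : ℝ}
    (hgi : HKIntegral a b g β) {ε : ℝ} (hε : 0 < ε) :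
    ∃ G : ℝ → ℝ, Monotone G ∧
      (∀ x ∈ Set.Ioo a b, DifferentiableAt ℝ G x → g x ≤ deriv G x) ∧
      ∀ η > 0, volume {x | x ∈ Set.Ioo a b ∧ DifferentiableAt ℝ G x ∧ g x + 2 * η ≤ deriv G x} ≤
        ENNReal.ofReal (2 * ε / η) := by
  obtain ⟨δ, hδ, hs⟩ := HK.gauge hgi hε
  set H : ℝ → ℝ := fun x => sSup {s | FS g δ a x s} with hH
  have hbdd : ∀ x ≤ b, BddAbove {s | FS g δ a x s} := by
    intro x hx
    refine ⟨β + ε, fun s h => ?_⟩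
    obtain ⟨s', hs'⟩ := cousin g δ hx (fun y hy => hδ y ⟨h.le.trans hy.1, hy.2⟩)
    have h1 := (abs_lt.1 (hs _ (h.trans hs'))).2
    have h2 := hs'.nonneg hg
    linarith
  have hne : ∀ x, a ≤ x → x ≤ b → {s | FS g δ a x s}.Nonempty := fun x hx hxb =>
    cousin g δ hx (fun y hy => hδ y ⟨hy.1, hy.2.trans hxb⟩)
  have hsup : ∀ u v s, a ≤ u → v ≤ b → FS g δ u v s → H u + s ≤ H v := by
    intro u v s hu hv h
    have : H u ≤ H v - s := by
      refine csSup_le (hne u hu (h.le.trans hv)) fun s' hs' => ?_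
      have := le_csSup (hbdd v hv) (FS.trans hs' h)
      simp only [hH]
      linarith
    linarith
  set c : ℝ → ℝ := fun x => max a (min x b) with hc
  have hca : ∀ x, a ≤ c x := fun x => le_max_left _ _
  have hcb : ∀ x, c x ≤ b := fun x => max_le hab.le (min_le_right _ _)
  have hcm : Monotone c := fun x y hxy => by simp only [hc]; gcongr
  have hcid : ∀ x ∈ Set.Icc a b, c x = x := fun x hx => by
    simp [hc, hx.1, hx.2]
  set G : ℝ → ℝ := fun x => H (c x) with hGdef
  have hG : ∀ u v s, a ≤ u → v ≤ b → FS g δ u v s → G u + s ≤ G v := by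
    intro u v s hu hv h
    have huv := h.le
    simp only [hGdef]
    rw [hcid u ⟨hu, huv.trans hv⟩, hcid v ⟨hu.trans huv, hv⟩]
    exact hsup u v s hu hv h
  refine ⟨G, ?_, ?_, ?_⟩
  · intro x y hxy
    obtain ⟨s, h⟩ := cousin g δ (hcm hxy) (fun z hz =>
      hδ z ⟨(hca x).trans hz.1, hz.2.trans (hcb y)⟩)
    have := hsup _ _ s (hca x) (hcb y) h
    have := h.nonneg hg
    simp only [hGdef]
    linarith
  · intro x hx hd
    refine le_of_forall_pos_le_add fun η hη => ?_
    obtain ⟨r, hr, h⟩ := straddle hd hη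
    set m := min (min (r / 2) (δ x / 2)) (b - x) with hm
    have hdx := hδ x ⟨hx.1.le, hx.2.le⟩
    have hm0 : 0 < m := lt_min (lt_min (by linarith) (by linarith)) (by linarith [hx.2])
    have hm1 : m ≤ r / 2 := (min_le_left _ _).trans (min_le_left _ _)
    have hm2 : m ≤ δ x / 2 := (min_le_left _ _).trans (min_le_right _ _)
    have hm3 : m ≤ b - x := min_le_right _ _
    have h1 := (abs_le.1 (h x (x + m) le_rfl (by linarith) (by linarith))).2
    have h2 := hG x (x + m) _ hx.1.le (by linarith)
      (FS.single x (by linarith) ⟨le_rfl, by linarith⟩ (by linarith))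
    simp only [add_sub_cancel_left] at h1 h2
    have : g x * m ≤ (deriv G x + η) * m := by linarith
    exact le_of_mul_le_mul_right this hm0
  · intro η hη
    have hGa : G a = 0 := by
      simp only [hGdef]
      rw [hcid a ⟨le_rfl, hab.le⟩]
      have : {s | FS g δ a a s} = {0} := by
        ext s
        constructor
        · intro h
          have h' : FS g δ a a s := h
          cases h' with
          | refl => rfl
          | snoc v _ s y hF hvw _ _ => exact absurd hF.le (not_le.2 hvw)
        · rintro rfl
          exact FS.refl
      simp [hH, this]
    have hγ : ∀ s, FS g δ a b s → G b - s ≤ 2 * ε := by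
      intro s h
      have h1 : G b ≤ β + ε := by
        simp only [hGdef]
        rw [hcid b ⟨hab.le, le_rfl⟩]
        exact csSup_le (hne b hab.le le_rfl) fun s hs' => by
          linarith [(abs_lt.1 (hs s hs')).2]
      linarith [(abs_lt.1 (hs s h)).1]
    set E := {x | x ∈ Set.Ioo a b ∧ DifferentiableAt ℝ G x ∧ g x + 2 * η ≤ deriv G x} with hE
    set P : ℕ → Set ℝ := fun m => {x | x ∈ E ∧ ∀ u v, u ≤ x → x ≤ v → v - u < 1 / ((m:ℝ) + 1) →
      v - u < δ x ∧ g x * (v - u) + η * (v - u) ≤ G v - G u} with hP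
    have hPmono : Monotone P := by
      intro m n hmn x hx
      refine ⟨hx.1, fun u v hu hv huv => hx.2 u v hu hv (huv.trans_le ?_)⟩
      gcongr
    have hPE : E ⊆ ⋃ m, P m := by
      intro x hx
      obtain ⟨r, hr, h⟩ := straddle hx.2.1 hη
      obtain ⟨m, hm⟩ := exists_nat_one_div_lt (lt_min hr (hδ x ⟨hx.1.1.le, hx.1.2.le⟩))
      refine Set.mem_iUnion.2 ⟨m, hx, fun u v hu hv huv => ?_⟩
      have h3 := huv.trans hm
      refine ⟨h3.trans_le (min_le_right _ _), ?_⟩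
      have h1 := (abs_le.1 (h u v hu hv (h3.trans_le (min_le_left _ _)))).1
      have h2 := mul_le_mul_of_nonneg_right hx.2.2 (by linarith : 0 ≤ v - u)
      linarith
    refine (measure_mono hPE).trans ?_
    refine le_of_tendsto' (tendsto_measure_iUnion_atTop hPmono) fun m => ?_
    exact grid hab hδ hG hγ hη (r := 1 / ((m:ℝ) + 1)) (by positivity) (P m)
      (fun x hx => ⟨hx.1.1.1, hx.1.1.2.le⟩) (fun x hx => hx.2) hGa

lemma integrable_of_nonneg {a b : ℝ} (hab : a < b) {g : ℝ → ℝ} (hg : ∀ x, 0 ≤ g x) {β : ℝ}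
    (hgi : HKIntegral a b g β) : IntegrableOn g (Set.Icc a b) volume := by
  rw [integrableOn_Icc_iff_integrableOn_Ioo]
  have hex : ∀ k : ℕ, (0:ℝ) < 1 / ((k:ℝ) + 1) := fun k => by positivity
  choose G hGm hGge hGvol using fun k : ℕ => approx hab hg hgi (hex k)
  have hmeas : AEMeasurable g (volume.restrict (Set.Ioo a b)) := by
    refine TendstoInMeasure.aemeasurable (u := atTop) (f := fun k : ℕ => deriv (G k))
      (fun k => (measurable_deriv _).aemeasurable) ?_
    refine tendstoInMeasure_iff_dist.2 fun η hη => ?_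
    have hlim : Tendsto (fun k : ℕ => ENNReal.ofReal (2 * (1 / ((k:ℝ) + 1)) / (η / 2))) atTop
        (𝓝 0) := by
      rw [← ENNReal.ofReal_zero]
      refine ENNReal.tendsto_ofReal ?_
      have := (tendsto_one_div_add_atTop_nhds_zero_nat (𝕜 := ℝ)).const_mul 2 |>.div_const (η / 2)
      simpa using this
    refine tendsto_of_tendsto_of_tendsto_of_le_of_le tendsto_const_nhds hlim
      (fun _ => bot_le) fun k => ?_
    refine le_trans ?_ (hGvol k (η / 2) (half_pos hη))
    rw [Measure.restrict_apply' measurableSet_Ioo]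
    refine measure_mono_ae ?_
    filter_upwards [(hGm k).ae_differentiableAt] with x hd hx
    obtain ⟨h1, h2⟩ := hx
    refine ⟨h2, hd, ?_⟩
    have h3 := hGge k x h2 hd
    have h4 : η ≤ dist (deriv (G k) x) (g x) := h1
    rw [Real.dist_eq, abs_of_nonneg (sub_nonneg.2 h3)] at h4
    linarith
  have hD : IntegrableOn (deriv (G 0)) (Set.Ioo a b) volume := by
    rw [← integrableOn_Icc_iff_integrableOn_Ioo,
      ← intervalIntegrable_iff_integrableOn_Icc_of_le hab.le]
    exact MonotoneOn.intervalIntegrable_deriv ((hGm 0).monotoneOn _)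
  refine Integrable.mono' hD hmeas.aestronglyMeasurable ?_
  filter_upwards [ae_restrict_of_ae (hGm 0).ae_differentiableAt,
    ae_restrict_mem measurableSet_Ioo] with x hd hx
  rw [Real.norm_eq_abs, abs_of_nonneg (hg x)]
  exact hGge 0 x hx hd

/-- If `f` and `|f|` are both HK integrable on `[a,b]`, then `f` is Lebesgue
integrable on `[a,b]` and the HK integral equals the Lebesgue integral. -/
theorem lebesgue_integrable_of_hk_abs (a b : ℝ) (hab : a ≤ b) (f : ℝ → ℝ) (α β : ℝ)
    (hf : HKIntegral a b f α) (habs : HKIntegral a b (fun x => |f x|) β) :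
    MeasureTheory.IntegrableOn f (Set.Icc a b) MeasureTheory.volume ∧
      ∫ x in Set.Icc a b, f x = α := by
  have hi : IntegrableOn f (Set.Icc a b) volume := by
    rcases hab.eq_or_lt with rfl | hlt
    · simp
    · have h1 := integrable_of_nonneg hlt (fun x => abs_nonneg (f x)) habs
      have h2 := integrable_of_nonneg hlt (g := fun x => f x + |f x|)
        (fun x => by linarith [neg_abs_le (f x)]) (HK.add hf habs)
      have h3 := h2.sub h1
      refine h3.congr (Eventually.of_forall fun x => ?_)
      simp
  refine ⟨hi, le_antisymm ?_ (HK.le_integral hab hf hi)⟩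
  have h := HK.le_integral hab (HK.neg hf) hi.neg
  rw [integral_neg] at h
  linarith
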